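/- There is a constant τ = τ(n) > 0 with the following property: for each atomless Borel probability measure μ on ℝⁿ there exist a point y ∈ ℝⁿ and a radius R > 0 such that μ(B(y, 2R)) ≥ τ and μ(ℝⁿ \ B(y, 3R)) ≥ τ. -/

import Mathlib

open MeasureTheory Metric Set Filter
open scoped ENNReal Topology NNReal

noncomputable section

/-- `ℝⁿ` as a Euclidean space. -/
abbrev En (n : ℕ) : Type := EuclideanSpace ℝ (Fin n)

/-- A smooth test function compactly supported inside the set `Ω`. -/
def SmoothTest {n : ℕ} (Ω : Set (En n)) (φ : En n → ℝ) : Prop :=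
  ContDiff ℝ (⊤ : ℕ∞) φ ∧ HasCompactSupport φ ∧ tsupport φ ⊆ Ω

/-- Frobenius norm of an `m × n` array of reals. -/
def frobNorm {m n : ℕ} (M : Fin m → Fin n → ℝ) : ℝ :=
  Real.sqrt (∑ j, ∑ i, M j i ^ 2)

/-- `Df = σ ⬝ ν` is the polar decomposition of the distributional derivative of the
mapping `f : Ω → ℝᵐ`: `σ` is a matrix field of unit Frobenius norm `ν`-a.e., `ν` is
carried by `Ω`, and the integration-by-parts formula holds against all smooth test
functions compactly supported in `Ω`.  In particular `ν = |Df|` is the total variation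
measure of `Df` on `Ω`. -/
def IsVariationMeasure {n m : ℕ} (Ω : Set (En n)) (f : En n → En m)
    (σ : En n → Fin m → Fin n → ℝ) (ν : Measure (En n)) : Prop :=
  Measurable σ ∧ (∀ᵐ x ∂ν, frobNorm (σ x) = 1) ∧ ν Ωᶜ = 0 ∧
    ∀ φ : En n → ℝ, SmoothTest Ω φ → ∀ (j : Fin m) (i : Fin n),
      ∫ x in Ω, f x j * fderiv ℝ φ x (EuclideanSpace.single i 1) ∂volume
        = - ∫ x, φ x * σ x j i ∂ν

/-- `f ∈ BV(Ω, ℝᵐ)` with total variation measure `ν`. -/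
def MemBV {n m : ℕ} (Ω : Set (En n)) (f : En n → En m) (ν : Measure (En n)) : Prop :=
  IntegrableOn f Ω volume ∧ ν Ω < ⊤ ∧ ∃ σ, IsVariationMeasure Ω f σ ν

/-- `f ∈ BV_loc(Ω, ℝᵐ)` with total variation measure `ν`, finite on compact subsets of `Ω`. -/
def MemBVloc {n m : ℕ} (Ω : Set (En n)) (f : En n → En m) (ν : Measure (En n)) : Prop :=
  LocallyIntegrableOn f Ω volume ∧ (∀ C : Set (En n), IsCompact C → C ⊆ Ω → ν C < ⊤) ∧
    ∃ σ, IsVariationMeasure Ω f σ ν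

/-- Scalar version of `IsVariationMeasure`: `Du = σ ⬝ ν` with `|σ| = 1` `ν`-a.e. -/
def IsVariationMeasureS {n : ℕ} (Ω : Set (En n)) (u : En n → ℝ)
    (σ : En n → Fin n → ℝ) (ν : Measure (En n)) : Prop :=
  Measurable σ ∧ (∀ᵐ x ∂ν, Real.sqrt (∑ i, σ x i ^ 2) = 1) ∧ ν Ωᶜ = 0 ∧
    ∀ φ : En n → ℝ, SmoothTest Ω φ → ∀ i : Fin n,
      ∫ x in Ω, u x * fderiv ℝ φ x (EuclideanSpace.single i 1) ∂volume
        = - ∫ x, φ x * σ x i ∂ν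

/-- `u ∈ BV(Ω)` with total variation measure `ν`. -/
def MemBVs {n : ℕ} (Ω : Set (En n)) (u : En n → ℝ) (ν : Measure (En n)) : Prop :=
  IntegrableOn u Ω volume ∧ ν Ω < ⊤ ∧ ∃ σ, IsVariationMeasureS Ω u σ ν

/-- `u ∈ BV_loc(Ω)` with total variation measure `ν`. -/
def MemBVlocs {n : ℕ} (Ω : Set (En n)) (u : En n → ℝ) (ν : Measure (En n)) : Prop :=
  LocallyIntegrableOn u Ω volume ∧ (∀ C : Set (En n), IsCompact C → C ⊆ Ω → ν C < ⊤) ∧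
    ∃ σ, IsVariationMeasureS Ω u σ ν

/-- `z` is the approximate limit of `f` at `x`. -/
def ApproxLimAt {n m : ℕ} (f : En n → En m) (x : En n) (z : En m) : Prop :=
  Tendsto (fun r : ℝ =>
      (∫ y in Metric.ball x r, ‖f y - z‖ ∂volume) / (volume (Metric.ball x r)).toReal)
    (nhdsWithin 0 (Set.Ioi 0)) (nhds 0)

/-- `f̃⁻¹(A)`: the preimage of `A` under the precise representative (approximate limit)
of `f`; a point belongs to it iff the approximate limit of `f` exists there and lies in `A`. -/
def tildePreimage {n m : ℕ} (f : En n → En m) (A : Set (En m)) : Set (En n) :=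
  {x | ∃ z ∈ A, ApproxLimAt f x z}

/-- `f` has no jump part: its variation measure does not charge the approximate
discontinuity set of `f`. -/
def NoJumpPart {n m : ℕ} (f : En n → En m) (ν : Measure (En n)) : Prop :=
  ν {x | ¬ ∃ z, ApproxLimAt f x z} = 0

/-- `f` is a homeomorphism of `Ω₁` onto `Ω₂`, with inverse `g`. -/
def IsHomeoOn {n : ℕ} (f g : En n → En n) (Ω₁ Ω₂ : Set (En n)) : Prop :=
  ContinuousOn f Ω₁ ∧ ContinuousOn g Ω₂ ∧ MapsTo f Ω₁ Ω₂ ∧ MapsTo g Ω₂ Ω₁ ∧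
    (∀ x ∈ Ω₁, g (f x) = x) ∧ (∀ y ∈ Ω₂, f (g y) = y)

/-!
Fix a small threshold `τ`. Balls of large radius can have measure at least `τ`, whereas, `μ` being
atomless, balls of small radius cannot. Halving the radius, we meet a scale `R` at which some ball
`B(y, 2R)` has measure at least `τ` but no ball of radius `R` does. Since `B(y, 3R)` is covered by
boundedly many balls of radius `R`, its measure is at most a fixed multiple of `τ`, and so at
least `τ` is left outside it.
-/

/-- `X` is a doubling metric space with constant `N`: every ball is covered by `N` balls of half
its radius. The balls are open, and their centers may be any points of `X`. -/
def IsDoublingWith (X : Type*) [PseudoMetricSpace X] (N : ℕ) : Prop :=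
  ∀ (x : X) (R : ℝ), 0 < R → ∃ t : Finset X, t.card ≤ N ∧ ball x (2 * R) ⊆ ⋃ y ∈ t, ball y R

theorem IsDoublingWith.exists_ball_two_pow_mul_subset {X : Type*} [PseudoMetricSpace X] {N : ℕ}
    (hX : IsDoublingWith X N) (k : ℕ) (x : X) {R : ℝ} (hR : 0 < R) :
    ∃ t : Finset X, t.card ≤ N ^ k ∧ ball x (2 ^ k * R) ⊆ ⋃ y ∈ t, ball y R := by
  classical
  induction k generalizing R with
  | zero => exact ⟨{x}, by simp, by simp⟩
  | succ k ih =>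
    obtain ⟨s, hs_card, hs⟩ := ih (R := 2 * R) (by positivity)
    choose t ht_card ht using fun y : X => hX y R hR
    refine ⟨s.biUnion t, (Finset.card_biUnion_le_card_mul s t N fun y _ => ht_card y).trans ?_, ?_⟩
    · rw [pow_succ]
      gcongr
    · rw [pow_succ, mul_assoc, Finset.set_biUnion_biUnion]
      exact hs.trans (iUnion₂_mono fun y _ => ht y)

theorem exists_isDoublingWith (E : Type*) [SeminormedAddCommGroup E] [NormedSpace ℝ E]
    [ProperSpace E] : ∃ N, IsDoublingWith E N := by
  classical
  obtain ⟨s, -, hs_fin, hs⟩ := (isCompact_closedBall (0 : E) 2).finite_cover_balls one_pos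
  lift s to Finset E using hs_fin
  refine ⟨s.card, fun x R hR => ⟨s.image (x + R • ·), Finset.card_image_le, fun z hz => ?_⟩⟩
  obtain ⟨w, rfl⟩ : ∃ w, x + R • w = z := ⟨R⁻¹ • (z - x), by simp [smul_inv_smul₀ hR.ne']⟩
  have dist_affine (v : E) : dist (x + R • w) (x + R • v) = R * dist w v := by
    rw [dist_add_left, dist_smul₀, Real.norm_of_nonneg hR.le]
  have hw : w ∈ closedBall (0 : E) 2 := by
    have h : R * dist w 0 < 2 * R := by
      rw [← dist_affine]
      simpa using hz
    exact (lt_of_mul_lt_mul_left (h.trans_eq (mul_comm 2 R)) hR.le).le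
  obtain ⟨v, hv, hwv⟩ := mem_iUnion₂.1 (hs hw)
  refine mem_iUnion₂.2 ⟨x + R • v, Finset.mem_image_of_mem _ hv, ?_⟩
  rw [mem_ball, dist_affine]
  exact mul_lt_of_lt_one_right hR hwv

theorem le_measure_limsup_atTop {α : Type*} [MeasurableSpace α] {μ : Measure α} [IsFiniteMeasure μ]
    {s : ℕ → Set α} (hs : ∀ i, NullMeasurableSet (s i) μ) {c : ℝ≥0∞}
    (hc : ∃ᶠ i in atTop, c ≤ μ (s i)) : c ≤ μ (limsup s atTop) := by
  have tail_antitone : Antitone fun n => ⋃ i ≥ n, s i :=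
    fun _ _ hmn => biUnion_mono (fun _ hi => hmn.trans hi) fun _ _ => Subset.rfl
  have tail_meas (n : ℕ) : NullMeasurableSet (⋃ i ≥ n, s i) μ :=
    .iUnion fun i => .iUnion fun _ => hs i
  have le_tail (n : ℕ) : c ≤ μ (⋃ i ≥ n, s i) :=
    have ⟨i, hni, hi⟩ := frequently_atTop.1 hc n
    hi.trans (measure_mono (subset_biUnion_of_mem (u := s) hni))
  calc c ≤ ⨅ n, μ (⋃ i ≥ n, s i) := le_iInf le_tail
    _ = μ (⋂ n, ⋃ i ≥ n, s i) :=
      (tail_antitone.measure_iInter tail_meas ⟨0, measure_ne_top _ _⟩).symm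
    _ = μ (limsup s atTop) := by
      simp only [limsup_eq_iInf_iSup_of_nat, iSup_eq_iUnion, iInf_eq_iInter]

theorem tendsto_measure_ball_nhdsGT_zero {X : Type*} [MetricSpace X] [MeasurableSpace X]
    [OpensMeasurableSpace X] (μ : Measure X) [IsLocallyFiniteMeasure μ] (x : X) :
    Tendsto (fun r => μ (ball x r)) (𝓝[>] 0) (𝓝 (μ {x})) := by
  obtain ⟨R, hR, hμR⟩ := (μ.finiteAt_nhds x).exists_mem_basis nhds_basis_ball
  simp only [← thickening_singleton] at hμR ⊢
  exact tendsto_measure_thickening_of_isClosed ⟨R, hR, hμR.ne⟩ isClosed_singleton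

/-- If balls `B(y k, r k)` with `r k → 0` all had measure at least `τ`, then so would their limsup.
For a point `x` in this limsup, `B(x, 2 r k)` contains `B(y k, r k)` for infinitely many `k`, which
makes `x` an atom. -/
theorem eventually_forall_measure_ball_lt {X : Type*} [MetricSpace X] [MeasurableSpace X]
    [OpensMeasurableSpace X] (μ : Measure X) [IsFiniteMeasure μ] [NullSingletonClass μ] {τ : ℝ≥0∞}
    (hτ : τ ≠ 0) : ∀ᶠ r in 𝓝[>] (0 : ℝ), ∀ y, μ (ball y r) < τ := by
  by_contra h
  obtain ⟨r, hr, hr_large⟩ := exists_seq_forall_of_frequently (not_eventually.1 h)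
  push Not at hr_large
  choose y hy using hr_large
  have limsup_ge : τ ≤ μ (limsup (fun k => ball (y k) (r k)) atTop) :=
    le_measure_limsup_atTop (fun _ => measurableSet_ball.nullMeasurableSet) (.of_forall hy)
  obtain ⟨x, hx⟩ := nonempty_of_measure_ne_zero (hτ.bot_lt.trans_le limsup_ge).ne'
  have two_mul_r : Tendsto (fun k => 2 * r k) atTop (𝓝[>] 0) := by
    have h := tendsto_nhdsWithin_iff.1 hr
    refine tendsto_nhdsWithin_iff.2 ⟨by simpa using h.1.const_mul 2, ?_⟩
    filter_upwards [h.2] with k hk using mul_pos two_pos (mem_Ioi.1 hk)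
  have ball_lt : ∀ᶠ k in atTop, μ (ball x (2 * r k)) < τ :=
    ((tendsto_measure_ball_nhdsGT_zero μ x).comp two_mul_r).eventually_lt_const
      (by simpa using hτ.bot_lt)
  obtain ⟨k, hxk, hk⟩ := ((mem_limsup_iff_frequently_mem.1 hx).and_eventually ball_lt).exists
  have ball_subset : ball (y k) (r k) ⊆ ball x (2 * r k) :=
    ball_subset_ball' (by linarith [mem_ball'.1 hxk])
  exact ((hy k).trans (measure_mono ball_subset)).not_gt hk

theorem exists_lt_measure_ball {X : Type*} [PseudoMetricSpace X] [MeasurableSpace X]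
    {μ : Measure X} {τ : ℝ≥0∞} (hτ : τ < μ univ) (x : X) : ∃ R > 0, τ < μ (ball x R) := by
  have balls_mono : Monotone fun n : ℕ => ball x (n : ℝ) :=
    fun _ _ hmn => ball_subset_ball (Nat.cast_le.2 hmn)
  have measure_tendsto := tendsto_measure_iUnion_atTop (μ := μ) balls_mono
  rw [iUnion_ball_nat] at measure_tendsto
  obtain ⟨n, hn, hn_pos⟩ :=
    ((measure_tendsto.eventually_const_lt hτ).and (eventually_gt_atTop 0)).exists
  exact ⟨n, Nat.cast_pos.2 hn_pos, hn⟩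

theorem exists_radius_le_measure_ball_two_mul_and_forall_lt {X : Type*} [MetricSpace X]
    [MeasurableSpace X] [OpensMeasurableSpace X] (μ : Measure X) [IsFiniteMeasure μ]
    [NullSingletonClass μ] {τ : ℝ≥0∞} (hτ : τ ≠ 0) (hτ_lt : τ < μ univ) :
    ∃ R > 0, (∃ y, τ ≤ μ (ball y (2 * R))) ∧ ∀ z, μ (ball z R) < τ := by
  obtain ⟨x, -⟩ := nonempty_of_measure_ne_zero (pos_of_gt hτ_lt).ne'
  obtain ⟨R₀, hR₀, hx⟩ := exists_lt_measure_ball hτ_lt x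
  have radii_tendsto : Tendsto (fun k : ℕ => R₀ / 2 ^ k) atTop (𝓝[>] 0) := by
    refine tendsto_nhdsWithin_iff.2 ⟨?_, .of_forall fun k => div_pos hR₀ (by positivity)⟩
    exact tendsto_const_nhds.div_atTop (tendsto_pow_atTop_atTop_of_one_lt one_lt_two)
  obtain ⟨k, hk, hk_succ⟩ := Nat.exists_not_and_succ_of_not_zero_of_exists
    (p := fun k => ∀ z, μ (ball z (R₀ / 2 ^ k)) < τ)
    (fun h => (h x).not_ge (by simpa using hx.le))
    (radii_tendsto.eventually (eventually_forall_measure_ball_lt μ hτ)).exists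
  push Not at hk
  refine ⟨R₀ / 2 ^ (k + 1), by positivity, ?_, hk_succ⟩
  rwa [pow_succ', ← div_div, div_right_comm, mul_div_cancel₀ _ two_ne_zero]

theorem exists_good_ball_general {X : Type*} [MetricSpace X] [MeasurableSpace X]
    [OpensMeasurableSpace X] {N : ℕ} (hX : IsDoublingWith X N) (μ : Measure X)
    [IsProbabilityMeasure μ] [NullSingletonClass μ] :
    ∃ (y : X) (R : ℝ), 0 < R ∧ ((N : ℝ≥0∞) ^ 2 + 2)⁻¹ ≤ μ (ball y (2 * R)) ∧
      ((N : ℝ≥0∞) ^ 2 + 2)⁻¹ ≤ μ (ball y (3 * R))ᶜ := by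
  set τ : ℝ≥0∞ := ((N : ℝ≥0∞) ^ 2 + 2)⁻¹ with τ_def
  have τ_ne_zero : τ ≠ 0 := by simp [τ_def, ENNReal.add_eq_top]
  have τ_lt_one : τ < μ univ := by
    rw [measure_univ, τ_def, ENNReal.inv_lt_one]
    exact ENNReal.one_lt_two.trans_le le_add_self
  obtain ⟨R, hR, ⟨y, hy⟩, ball_lt⟩ :=
    exists_radius_le_measure_ball_two_mul_and_forall_lt μ τ_ne_zero τ_lt_one
  obtain ⟨t, ht_card, ht⟩ := hX.exists_ball_two_pow_mul_subset 2 y hR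
  have measure_ball_le : μ (ball y (3 * R)) ≤ N ^ 2 * τ :=
    calc μ (ball y (3 * R)) ≤ μ (⋃ z ∈ t, ball z R) :=
          measure_mono ((ball_subset_ball (by linarith)).trans ht)
      _ ≤ ∑ z ∈ t, μ (ball z R) := measure_biUnion_finset_le _ _
      _ ≤ t.card * τ := by simpa using Finset.sum_le_card_nsmul t _ τ fun z _ => (ball_lt z).le
      _ ≤ N ^ 2 * τ := by gcongr; exact_mod_cast ht_card
  have add_le_one : μ (ball y (3 * R)) + τ ≤ 1 :=
    calc μ (ball y (3 * R)) + τ ≤ N ^ 2 * τ + 2 * τ := by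
          gcongr
          exact le_mul_of_one_le_left' ENNReal.one_lt_two.le
      _ = 1 := by
          rw [← add_mul, τ_def]
          exact ENNReal.mul_inv_cancel (by simp) (by simp)
  refine ⟨y, R, hR, hy, ?_⟩
  rw [prob_compl_eq_one_sub measurableSet_ball]
  exact ENNReal.le_sub_of_add_le_left (measure_ne_top _ _) add_le_one

/-- **Lemma (Statement 17).** There is `τ = τ(n) > 0` such that every atomless Borel
probability measure `μ` on `ℝⁿ` admits a point `y` and a radius `R > 0` with
`μ(B(y, 2R)) ≥ τ` and `μ(ℝⁿ \ B(y, 3R)) ≥ τ`. -/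
theorem exists_good_ball (n : ℕ) :
    ∃ τ : ℝ≥0∞, 0 < τ ∧
      ∀ μ : Measure (En n), IsProbabilityMeasure μ → (∀ x : En n, μ {x} = 0) →
        ∃ (y : En n) (R : ℝ), 0 < R ∧
          τ ≤ μ (Metric.ball y (2 * R)) ∧ τ ≤ μ (Metric.ball y (3 * R))ᶜ := by
  obtain ⟨N, hN⟩ := exists_isDoublingWith (En n)
  exact ⟨_, by simp, fun μ _ hμ =>
    have : NullSingletonClass μ := ⟨hμ⟩; exists_good_ball_general hN μ⟩
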